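/- For the cycle C_{2n} of even length 2n with n ≥ 2, one has m(C_{2n}) = 2. (Equivalently, reg K[C_{2n}] = |E| − 1.) -/

import Mathlib

/-!
For every finite graph `G`, the generators `(δ_A, 1)` span `ℝ^E × ℝ`: the empty cut gives `(0, 1)`,
and `δ_{a} + δ_{b} - δ_{a,b}` is twice the unit vector of the edge `ab`. Hence every combination of
all generators with strictly positive coefficients is interior to the cone, being a point of the
image of the open positive orthant under a surjective, hence open, linear map
(`sum_mem_interior`). An edge is cut by exactly half of all vertex sets, so with equal coefficients
this puts `(1, …, 1; 2)` in the interior. If `G` is bipartite, as an even cycle is, this point is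
the sum of the empty cut and the cut of a colour class, so it lies in the monoid and `m(G) ≤ 2`.

Conversely the cone satisfies `0 ≤ x_e ≤ α` for each edge `e`. These inequalities are strict in the
interior, and `0 < x_e < α` over the integers forces `α ≥ 2`.
-/


/-! Basic definitions for cut monoids of finite simple graphs. -/

open Classical in
/-- The cut vector of a vertex set `A`, as a function on `Sym2 V`:
value `1` on pairs with exactly one element in `A`, and `0` otherwise. -/
noncomputable def cutVec {V : Type} (A : Set V) : Sym2 V → ℤ :=
  Sym2.lift ⟨fun v w => if ((v ∈ A) ↔ (w ∈ A)) then 0 else 1,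
    fun v w => if_congr iff_comm rfl rfl⟩

variable {V : Type}

/-- The generators `(δ_A, 1)` of the cut monoid of `G`. -/
def cutGens (G : SimpleGraph V) : Set ((G.edgeSet → ℤ) × ℤ) :=
  {p | ∃ A : Set V, p = (fun e => cutVec A e.1, 1)}

/-- The cut monoid `M_G` of a graph `G`. -/
def cutMonoid (G : SimpleGraph V) : AddSubmonoid ((G.edgeSet → ℤ) × ℤ) :=
  AddSubmonoid.closure (cutGens G)

/-- The group `gp(M_G)` generated by the cut monoid. -/
def cutGroup (G : SimpleGraph V) : AddSubgroup ((G.edgeSet → ℤ) × ℤ) :=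
  AddSubgroup.closure (cutGens G)

/-- `M_G` is normal: every `x ∈ gp(M_G)` with `n • x ∈ M_G` for some `n ≥ 1` lies in `M_G`. -/
def CutNormal (G : SimpleGraph V) : Prop :=
  ∀ x ∈ cutGroup G, (∃ n : ℕ, 1 ≤ n ∧ n • x ∈ cutMonoid G) → x ∈ cutMonoid G

/-- `M_G` is seminormal: every `x ∈ gp(M_G)` with `2 • x ∈ M_G` and `3 • x ∈ M_G`
lies in `M_G`. -/
def CutSeminormal (G : SimpleGraph V) : Prop :=
  ∀ x ∈ cutGroup G, 2 • x ∈ cutMonoid G → 3 • x ∈ cutMonoid G → x ∈ cutMonoid G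

/-- Generators of the cone of `M_G`: nonnegative real multiples of the `(δ_A, 1)`. -/
noncomputable def cutConeGens (G : SimpleGraph V) : Set ((G.edgeSet → ℝ) × ℝ) :=
  {q | ∃ (c : ℝ) (A : Set V), 0 ≤ c ∧
    q = c • ((fun e => ((cutVec A e.1 : ℤ) : ℝ), (1 : ℝ)))}

/-- The cone `cone(M_G)`: all finite nonnegative real combinations of the `(δ_A, 1)`. -/
noncomputable def cutCone (G : SimpleGraph V) : Set ((G.edgeSet → ℝ) × ℝ) :=
  (AddSubmonoid.closure (cutConeGens G) : Set ((G.edgeSet → ℝ) × ℝ))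

/-- The canonical map from `ℤ^E × ℤ` to `ℝ^E × ℝ`. -/
noncomputable def toRealCut (G : SimpleGraph V) (p : (G.edgeSet → ℤ) × ℤ) :
    (G.edgeSet → ℝ) × ℝ :=
  (fun e => ((p.1 e : ℤ) : ℝ), ((p.2 : ℤ) : ℝ))

/-- `int(M_G)`: elements of `M_G` mapping into the topological interior of `cone(M_G)`. -/
noncomputable def cutInterior (G : SimpleGraph V) : Set ((G.edgeSet → ℤ) × ℤ) :=
  {p | p ∈ cutMonoid G ∧ toRealCut G p ∈ interior (cutCone G)}

/-- The set of last coordinates `α ∈ ℕ` realized by elements of `int(M_G)`;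
its least element is `m(G)`. -/
noncomputable def cutDegrees (G : SimpleGraph V) : Set ℕ :=
  {α | ∃ x : G.edgeSet → ℤ, ((x, (α : ℤ)) : (G.edgeSet → ℤ) × ℤ) ∈ cutInterior G}

/-- `H` is a minor of `G`: branch sets `B u` are nonempty, pairwise disjoint,
induce connected subgraphs, and edges of `H` are witnessed by edges of `G`. -/
def GraphMinor {W V : Type} (H : SimpleGraph W) (G : SimpleGraph V) : Prop :=
  ∃ B : W → Set V,
    (∀ u, (B u).Nonempty) ∧
    (∀ u v, u ≠ v → Disjoint (B u) (B v)) ∧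
    (∀ u, (G.induce (B u)).Connected) ∧
    (∀ u v, H.Adj u v → ∃ a ∈ B u, ∃ b ∈ B v, G.Adj a b)

/-- `G` is `K₅`-minor-free. -/
def K5Free (G : SimpleGraph V) : Prop :=
  ¬ GraphMinor (⊤ : SimpleGraph (Fin 5)) G

/-- `G` is bipartite: vertices split into two parts so every edge joins the parts. -/
def BipartiteG (G : SimpleGraph V) : Prop :=
  ∃ s : Set V, ∀ ⦃v w⦄, G.Adj v w → ((v ∈ s ∧ w ∉ s) ∨ (w ∈ s ∧ v ∉ s))

/-- `G` has an induced cycle of length `n` (n ≥ 3): an induced-subgraph copy of the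
cycle graph of length `n`. -/
def HasInducedCycleLen (G : SimpleGraph V) (n : ℕ) : Prop :=
  3 ≤ n ∧ Nonempty (SimpleGraph.cycleGraph n ↪g G)

/-- `G` contains a triangle. -/
def HasTriangle (G : SimpleGraph V) : Prop :=
  ∃ a b c, G.Adj a b ∧ G.Adj b c ∧ G.Adj a c

/-- `G` is chordal: every induced cycle is a triangle. -/
def ChordalG (G : SimpleGraph V) : Prop :=
  ∀ n, HasInducedCycleLen G n → n = 3

/-- `G` is bridgeless: every edge lies on some cycle. -/
def BridgelessG (G : SimpleGraph V) : Prop :=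
  ∀ e ∈ G.edgeSet, ∃ (v : V) (c : G.Walk v v), c.IsCycle ∧ e ∈ c.edges

/-- `G` is (isomorphic to) a cycle of length `n`. -/
def IsCycleOfLen (G : SimpleGraph V) (n : ℕ) : Prop :=
  3 ≤ n ∧ Nonempty (G ≃g SimpleGraph.cycleGraph n)

/-- `G` is a cycle. -/
def IsCycleGraph (G : SimpleGraph V) : Prop :=
  ∃ n, IsCycleOfLen G n

/-- `G` is a `0`-sum of `G1` and `G2`: copies of `G1`, `G2` cover `G`,
overlap in exactly one vertex, and every edge comes from `G1` or `G2`. -/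
def IsZeroSumDecomp {V1 V2 : Type} (G : SimpleGraph V) (G1 : SimpleGraph V1)
    (G2 : SimpleGraph V2) : Prop :=
  ∃ (f1 : V1 ↪ V) (f2 : V2 ↪ V),
    Set.range f1 ∪ Set.range f2 = Set.univ ∧
    (∃ v, Set.range f1 ∩ Set.range f2 = {v}) ∧
    (∀ a b, G.Adj a b ↔
      ((∃ x y, f1 x = a ∧ f1 y = b ∧ G1.Adj x y) ∨
       (∃ x y, f2 x = a ∧ f2 y = b ∧ G2.Adj x y)))

/-- `G` is a `1`-sum of `G1` and `G2` along a common edge. -/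
def IsOneSumDecomp {V1 V2 : Type} (G : SimpleGraph V) (G1 : SimpleGraph V1)
    (G2 : SimpleGraph V2) : Prop :=
  ∃ (f1 : V1 ↪ V) (f2 : V2 ↪ V) (v w : V),
    v ≠ w ∧
    Set.range f1 ∪ Set.range f2 = Set.univ ∧
    Set.range f1 ∩ Set.range f2 = {v, w} ∧
    (∃ x y, f1 x = v ∧ f1 y = w ∧ G1.Adj x y) ∧
    (∃ x y, f2 x = v ∧ f2 y = w ∧ G2.Adj x y) ∧
    (∀ a b, G.Adj a b ↔
      ((∃ x y, f1 x = a ∧ f1 y = b ∧ G1.Adj x y) ∨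
       (∃ x y, f2 x = a ∧ f2 y = b ∧ G2.Adj x y)))

/-- Ring graphs: obtained, up to adding isolated vertices, from finitely many
(finite) trees and cycles by iterated `0`-sums and `1`-sums. -/
inductive IsRingGraph : {V : Type} → SimpleGraph V → Prop
  | tree {V : Type} (G : SimpleGraph V) :
      Finite V → G.Connected → G.IsAcyclic → IsRingGraph G
  | cycle {V : Type} (G : SimpleGraph V) : IsCycleGraph G → IsRingGraph G
  | zeroSum {V1 V2 V : Type} {G1 : SimpleGraph V1} {G2 : SimpleGraph V2}
      {G : SimpleGraph V} :
      IsRingGraph G1 → IsRingGraph G2 → IsZeroSumDecomp G G1 G2 → IsRingGraph G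
  | oneSum {V1 V2 V : Type} {G1 : SimpleGraph V1} {G2 : SimpleGraph V2}
      {G : SimpleGraph V} :
      IsRingGraph G1 → IsRingGraph G2 → IsOneSumDecomp G G1 G2 → IsRingGraph G
  | addIsolated {V W : Type} {G : SimpleGraph V} {H : SimpleGraph W} (f : V ↪ W) :
      IsRingGraph G → (∀ a b, H.Adj a b ↔ ∃ x y, f x = a ∧ f y = b ∧ G.Adj x y) →
      IsRingGraph H

/-- An edge of an induced subgraph is an edge of the ambient graph. -/
lemma induce_edge_mem (G : SimpleGraph V) (s : Set V) (e : Sym2 s)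
    (he : e ∈ (G.induce s).edgeSet) : e.map Subtype.val ∈ G.edgeSet := by
  induction e using Sym2.ind with
  | _ a b =>
    rw [Sym2.map_pair_eq, SimpleGraph.mem_edgeSet]
    exact he

/-- Restriction of a vector indexed by the edges of `G` to the edges of the
subgraph of `G` induced on `s`. -/
noncomputable def restrictCut (G : SimpleGraph V) (s : Set V) (p : G.edgeSet → ℤ) :
    (G.induce s).edgeSet → ℤ :=
  fun e => p ⟨e.1.map Subtype.val, induce_edge_mem G s e.1 e.2⟩

/-! ### The cuts span, so their positive combinations are interior -/

/-- The real generator `(δ_A, 1)` of the cone of the cut monoid. -/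
noncomputable def realGen (G : SimpleGraph V) (A : Set V) : (G.edgeSet → ℝ) × ℝ :=
  (fun e => ((cutVec A e.1 : ℤ) : ℝ), 1)

open Classical in
lemma cutVec_mk (A : Set V) (a b : V) :
    cutVec A s(a, b) = if (a ∈ A ↔ b ∈ A) then 0 else 1 := rfl

lemma cutVec_mem (A : Set V) (e : Sym2 V) : 0 ≤ cutVec A e ∧ cutVec A e ≤ 1 := by
  induction e using Sym2.ind with
  | _ a b => rw [cutVec_mk]; split_ifs <;> simp

lemma cutVec_empty (e : Sym2 V) : cutVec (∅ : Set V) e = 0 := by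
  induction e using Sym2.ind with
  | _ a b => simp [cutVec_mk]

open Classical in
/-- On pairs of distinct vertices, `δ_{a} + δ_{b} - δ_{a,b}` is supported on `ab`, with value `2`. -/
lemma cutVec_pair {a b : V} (hab : a ≠ b) (e : Sym2 V) (he : ¬ e.IsDiag) :
    cutVec {a} e + cutVec {b} e - cutVec {a, b} e = if e = s(a, b) then 2 else 0 := by
  induction e using Sym2.ind with
  | _ c d =>
    have hcd : c ≠ d := by simpa using he
    simp only [cutVec_mk, Set.mem_singleton_iff, Set.mem_insert_iff, Sym2.eq_iff]
    by_cases h1 : c = a <;> by_cases h2 : c = b <;> by_cases h3 : d = a <;>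
      by_cases h4 : d = b <;> simp_all

lemma span_realGen [Fintype V] (G : SimpleGraph V) :
    Submodule.span ℝ (Set.range (realGen G)) = ⊤ := by
  classical
  set S := Submodule.span ℝ (Set.range (realGen G))
  have hg : ∀ A, realGen G A ∈ S := fun A => Submodule.subset_span ⟨A, rfl⟩
  have h0 : ((0 : G.edgeSet → ℝ), (1 : ℝ)) ∈ S := by
    have : realGen G ∅ = (0, 1) := by
      ext <;> simp [realGen, cutVec_empty]
    exact this ▸ hg ∅
  have h1 : ∀ e : G.edgeSet, ((Pi.single e 1 : G.edgeSet → ℝ), (0 : ℝ)) ∈ S := by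
    rintro ⟨e, he⟩
    induction e using Sym2.ind with
    | _ a b =>
      have hab : a ≠ b := G.ne_of_adj he
      have key : ((Pi.single ⟨s(a, b), he⟩ 1 : G.edgeSet → ℝ), (0 : ℝ)) =
          (1 / 2 : ℝ) • (realGen G {a} + realGen G {b} - realGen G {a, b} - (0, 1)) := by
        refine Prod.ext ?_ (by simp [realGen])
        funext f
        have := cutVec_pair hab f.1 (G.not_isDiag_of_mem_edgeSet f.2)
        have h2 : ((cutVec {a} f.1 : ℤ) : ℝ) + cutVec {b} f.1 - cutVec {a, b} f.1 =
            if f.1 = s(a, b) then 2 else 0 := by exact_mod_cast this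
        simp only [realGen, Prod.smul_fst, Prod.fst_sub, Prod.fst_add, Pi.smul_apply,
          Pi.sub_apply, Pi.add_apply, smul_eq_mul, sub_zero, h2,
          Pi.single_apply, Subtype.ext_iff]
        split_ifs <;> norm_num
      rw [key]
      exact S.smul_mem _ (S.sub_mem (S.sub_mem (S.add_mem (hg _) (hg _)) (hg _)) h0)
  rw [eq_top_iff]
  rintro ⟨x, t⟩ -
  have : (x, t) = ∑ e, x e • ((Pi.single e 1 : G.edgeSet → ℝ), (0 : ℝ)) +
      t • ((0 : G.edgeSet → ℝ), (1 : ℝ)) := by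
    refine Prod.ext ?_ ?_
    · funext f
      simp [Prod.fst_sum, Finset.sum_apply, Pi.single_apply]
    · simp [Prod.snd_sum]
  rw [this]
  exact S.add_mem (S.sum_mem fun e _ => S.smul_mem _ (h1 e)) (S.smul_mem _ h0)

lemma sum_mem_interior [Fintype V] (G : SimpleGraph V) (c : Set V → ℝ) (hc : ∀ A, 0 < c A) :
    ∑ A, c A • realGen G A ∈ interior (cutCone G) := by
  classical
  let L : (Set V → ℝ) →ₗ[ℝ] (G.edgeSet → ℝ) × ℝ := Fintype.linearCombination ℝ (realGen G)
  have hL : Function.Surjective L := by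
    rw [← LinearMap.range_eq_top, Fintype.range_linearCombination, span_realGen]
  have hopen : IsOpen (L '' Set.pi Set.univ fun _ => Set.Ioi (0 : ℝ)) :=
    L.isOpenMap_of_finiteDimensional hL _ (isOpen_set_pi Set.finite_univ fun _ _ => isOpen_Ioi)
  refine interior_maximal ?_ hopen ⟨c, fun A _ => hc A, Fintype.linearCombination_apply ..⟩
  rintro _ ⟨d, hd, rfl⟩
  rw [Fintype.linearCombination_apply]
  exact AddSubmonoid.sum_mem _ fun A _ =>
    AddSubmonoid.subset_closure ⟨d A, A, (hd A trivial).le, rfl⟩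

/-! ### The upper bound for bipartite graphs -/

/-- An edge is cut by exactly half of all vertex sets: toggling membership of one endpoint
exchanges the sets that cut it with those that do not. -/
lemma two_mul_sum_cutVec [Fintype V] {a b : V} (hab : a ≠ b) :
    2 * ∑ A : Set V, cutVec A s(a, b) = Fintype.card (Set V) := by
  classical
  have hinv : Function.Involutive fun A : Set V => symmDiff A {a} := fun A => by
    simp
  have h := Equiv.sum_comp hinv.toPerm fun A : Set V => cutVec A s(a, b)
  have h1 : ∀ A : Set V, cutVec A s(a, b) + cutVec (symmDiff A {a}) s(a, b) = 1 := fun A => by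
    simp only [cutVec_mk, Set.mem_symmDiff, Set.mem_singleton_iff]
    by_cases h1 : a ∈ A <;> by_cases h2 : b ∈ A <;> simp [h1, h2, hab.symm]
  rw [two_mul]
  nth_rewrite 2 [← h]
  rw [← Finset.sum_add_distrib]
  simp [Function.Involutive.coe_toPerm, h1]

lemma ones_two_mem_interior [Fintype V] (G : SimpleGraph V) :
    ((fun _ => 1, 2) : (G.edgeSet → ℝ) × ℝ) ∈ interior (cutCone G) := by
  classical
  have hpos : (0 : ℝ) < Fintype.card (Set V) := by exact_mod_cast Fintype.card_pos
  convert sum_mem_interior G (fun _ => 2 / (Fintype.card (Set V) : ℝ)) fun _ => by positivity using 1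
  rw [← Finset.smul_sum]
  refine Prod.ext ?_ ?_
  · funext ⟨e, he⟩
    induction e using Sym2.ind with
    | _ a b =>
      have h := two_mul_sum_cutVec (G.ne_of_adj he)
      have h' : 2 * ∑ A : Set V, ((cutVec A s(a, b) : ℤ) : ℝ) = Fintype.card (Set V) := by
        exact_mod_cast h
      simp only [Prod.smul_fst, Prod.fst_sum, Pi.smul_apply, Finset.sum_apply, realGen,
        smul_eq_mul]
      rw [div_mul_eq_mul_div, h', div_self hpos.ne']
  · simp only [Prod.smul_snd, Prod.snd_sum, realGen, smul_eq_mul, Finset.sum_const,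
      Finset.card_univ, nsmul_eq_mul, mul_one]
    rw [div_mul_cancel₀ _ hpos.ne']

lemma two_mem_cutDegrees [Fintype V] (G : SimpleGraph V) (h : BipartiteG G) :
    2 ∈ cutDegrees G := by
  obtain ⟨s, hs⟩ := h
  refine ⟨fun _ => 1, ?_, ?_⟩
  · have hsum : ((fun _ => 1, ((2 : ℕ) : ℤ)) : (G.edgeSet → ℤ) × ℤ) =
        (fun e => cutVec ∅ e.1, 1) + (fun e => cutVec s e.1, 1) := by
      refine Prod.ext ?_ (by norm_num)
      funext ⟨e, he⟩
      induction e using Sym2.ind with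
      | _ a b =>
        have := hs he
        simp only [Prod.fst_add, Pi.add_apply, cutVec_empty, zero_add, cutVec_mk]
        rw [if_neg (by tauto)]
    rw [hsum]
    exact add_mem (AddSubmonoid.subset_closure ⟨∅, rfl⟩) (AddSubmonoid.subset_closure ⟨s, rfl⟩)
  · convert ones_two_mem_interior G using 1
    simp [toRealCut]

/-! ### The lower bound for graphs with an edge -/

/-- A nonzero linear functional that is nonnegative on a set is positive on its interior. -/
lemma pos_of_mem_interior {E : Type*} [AddCommGroup E] [Module ℝ E] [TopologicalSpace E]
    [IsTopologicalAddGroup E] [ContinuousSMul ℝ E] {S : Set E} {f : E →ₗ[ℝ] ℝ}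
    (hf : f ≠ 0) (hS : ∀ p ∈ S, 0 ≤ f p) {p : E} (hp : p ∈ interior S) : 0 < f p := by
  have hopen : IsOpen (f '' interior S) :=
    f.isOpenMap_of_finiteDimensional (LinearMap.surjective hf) _ isOpen_interior
  have hsub : f '' interior S ⊆ Set.Ici 0 := by
    rintro _ ⟨q, hq, rfl⟩
    exact hS q (interior_subset hq)
  have := interior_maximal hsub hopen ⟨p, hp, rfl⟩
  rwa [interior_Ici] at this

lemma cutCone_bounds (G : SimpleGraph V) (e : G.edgeSet) {p : (G.edgeSet → ℝ) × ℝ}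
    (hp : p ∈ cutCone G) : 0 ≤ p.1 e ∧ p.1 e ≤ p.2 := by
  induction hp using AddSubmonoid.closure_induction with
  | mem q hq =>
    obtain ⟨c, A, hc, rfl⟩ := hq
    obtain ⟨h0, h1⟩ := cutVec_mem A e.1
    have h0' : (0 : ℝ) ≤ cutVec A e.1 := by exact_mod_cast h0
    have h1' : (cutVec A e.1 : ℝ) ≤ 1 := by exact_mod_cast h1
    exact ⟨mul_nonneg hc h0', mul_le_mul_of_nonneg_left h1' hc⟩
  | zero => simp
  | add x y _ _ hx hy => exact ⟨add_nonneg hx.1 hy.1, add_le_add hx.2 hy.2⟩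

lemma two_le_of_mem_cutDegrees (G : SimpleGraph V) (e : G.edgeSet) {α : ℕ}
    (h : α ∈ cutDegrees G) : 2 ≤ α := by
  obtain ⟨x, -, hx⟩ := h
  let f : (G.edgeSet → ℝ) × ℝ →ₗ[ℝ] ℝ := LinearMap.proj e ∘ₗ LinearMap.fst ℝ _ _
  let g : (G.edgeSet → ℝ) × ℝ →ₗ[ℝ] ℝ := LinearMap.snd ℝ _ _ - f
  have hf : f ≠ 0 := fun h => by
    simpa [f] using LinearMap.congr_fun h (fun _ => 1, 0)
  have hg : g ≠ 0 := fun h => by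
    simpa [f, g] using LinearMap.congr_fun h (0, 1)
  have h1 : (0 : ℝ) < x e :=
    pos_of_mem_interior hf (fun p hp => (cutCone_bounds G e hp).1) hx
  have h2 : (0 : ℝ) < ((α : ℤ) : ℝ) - x e :=
    pos_of_mem_interior hg (fun p hp => sub_nonneg.2 (cutCone_bounds G e hp).2) hx
  have h1' : 0 < x e := by exact_mod_cast h1
  have h2' : x e < (α : ℤ) := by exact_mod_cast sub_pos.1 h2
  omega

/-! ### Even cycles -/

lemma bipartite_even_cycle (n : ℕ) : BipartiteG (SimpleGraph.cycleGraph (2 * n)) := by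
  let C := SimpleGraph.cycleGraph.bicoloring_of_even (2 * n) (even_two_mul n)
  refine ⟨{v | C v = true}, fun v w hvw => ?_⟩
  have := C.valid hvw
  simp only [Set.mem_ofPred_eq]
  cases hv : C v <;> cases hw : C w <;> simp_all

/-- For the even cycle `C_{2n}` (`n ≥ 2`) one has `m(C_{2n}) = 2`. -/
theorem even_cycle_m (n : ℕ) (hn : 2 ≤ n) :
    IsLeast (cutDegrees (SimpleGraph.cycleGraph (2 * n))) 2 := by
  refine ⟨two_mem_cutDegrees _ (bipartite_even_cycle n), fun α hα => ?_⟩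
  have hadj : (SimpleGraph.cycleGraph (2 * n)).Adj ⟨0, by omega⟩ ⟨1, by omega⟩ := by
    rw [SimpleGraph.cycleGraph_adj']
    right
    rw [Fin.sub_def]
    simp [Nat.mod_eq_of_lt (show 1 < 2 * n by omega)]
  exact two_le_of_mem_cutDegrees _ ⟨s(_, _), hadj⟩ hα
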